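/- If ρ is a decimal palindrome whose decimal digits are all 0's and 1's, then 18·ρ is a v-palindrome. -/

import Mathlib

/-- The decimal digit reversal of a natural number. -/
def rev (n : ℕ) : ℕ := Nat.ofDigits 10 ((Nat.digits 10 n).reverse)

/-- The additive arithmetic function v, with v(p) = p and v(p^e) = p + e for e ≥ 2. -/
def v (n : ℕ) : ℕ := n.factorization.sum (fun p e => p + if e = 1 then 0 else e)

/-- n is a v-palindrome: 10 ∤ n, n ≠ r(n), and v(n) = v(r(n)). -/
def IsVPalindrome (n : ℕ) : Prop := ¬ (10 ∣ n) ∧ n ≠ rev n ∧ v n = v (rev n)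

/-! A number is the value at `10` of its digit polynomial, and `rev` is the value at `10` of the
reversed polynomial. Reversal of polynomials is multiplicative, so `rev (m * n) = rev m * rev n`
whenever the product of the digit polynomials has all its coefficients below `10`, that is, when
the multiplication has no carries. If the digits of `ρ` are at most `1`, the coefficients are
bounded by the digit sum of the other factor; for `18` it is `9`, whence `rev (18 * ρ) = 81 * ρ`.

Once `9 ∣ n`, each further factor `3` raises `v n` by `1`, so `81 * ρ = 3 ^ 2 * (9 * ρ)` exceeds
`9 * ρ` by `2` in `v`; so does `18 * ρ = 2 * (9 * ρ)`, since `ρ` is odd. -/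

open Polynomial

theorem v_mul_of_coprime {a b : ℕ} (h : a.Coprime b) : v (a * b) = v a + v b := by
  rw [v, Nat.factorization_mul_of_coprime h]
  exact Finsupp.sum_add_index_of_disjoint (by simpa using h.disjoint_primeFactors) _

theorem v_prime_pow {p e : ℕ} (hp : p.Prime) (he : e ≠ 0) :
    v (p ^ e) = p + if e = 1 then 0 else e := by
  rw [v, hp.factorization_pow, Finsupp.sum, Finsupp.support_single p he, Finset.sum_singleton,
    Finsupp.single_eq_same]

theorem v_prime_mul_of_not_dvd {p n : ℕ} (hp : p.Prime) (hn : ¬ p ∣ n) :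
    v (p * n) = p + v n := by
  have hv : v p = p := by simpa using v_prime_pow hp one_ne_zero
  rw [v_mul_of_coprime (hp.coprime_iff_not_dvd.2 hn), hv]

theorem v_prime_pow_mul_of_sq_dvd {p n : ℕ} (hp : p.Prime) (hn : n ≠ 0) (hdvd : p ^ 2 ∣ n)
    (k : ℕ) : v (p ^ k * n) = v n + k := by
  obtain ⟨e, m, hm, rfl⟩ := Nat.exists_eq_pow_mul_and_not_dvd hn p hp.ne_one
  have he : 2 ≤ e := (Nat.pow_dvd_pow_iff_le_right hp.one_lt).1 <|
    (((hp.coprime_iff_not_dvd.2 hm).pow_left 2).dvd_of_dvd_mul_right hdvd)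
  have hv : ∀ j, 2 ≤ j → v (p ^ j * m) = p + j + v m := fun j hj => by
    rw [v_mul_of_coprime ((hp.coprime_iff_not_dvd.2 hm).pow_left j), v_prime_pow hp (by omega),
      if_neg (by omega)]
  rw [← mul_assoc, ← pow_add, hv _ (by omega), hv e he]
  ring

theorem v_eighteen_mul_eq_v_eighty_one_mul {n : ℕ} (hn : Odd n) : v (18 * n) = v (81 * n) := by
  have h2 : ¬ 2 ∣ 9 * n := by
    rw [← even_iff_two_dvd, Nat.not_even_iff_odd]
    exact Odd.mul (by decide) hn
  calc v (18 * n) = v (2 * (9 * n)) := by ring_nf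
    _ = 2 + v (9 * n) := v_prime_mul_of_not_dvd Nat.prime_two h2
    _ = v (9 * n) + 2 := add_comm _ _
    _ = v (3 ^ 2 * (9 * n)) := (v_prime_pow_mul_of_sq_dvd Nat.prime_three
      (mul_ne_zero (by norm_num) hn.pos.ne') (Dvd.intro n rfl) 2).symm
    _ = v (81 * n) := by ring_nf

theorem ofDigits_map_range (b n : ℕ) (f : ℕ → ℕ) :
    Nat.ofDigits b ((List.range n).map f) = ∑ i ∈ Finset.range n, f i * b ^ i := by
  induction n with
  | zero => simp
  | succ n ih => simp [List.range_succ, Nat.ofDigits_append, ih, Finset.sum_range_succ, mul_comm]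

theorem ofDigits_reverse_coeffList (b : ℕ) (p : ℕ[X]) :
    Nat.ofDigits b p.coeffList.reverse = p.eval b := by
  rcases eq_or_ne p 0 with rfl | hp
  · simp
  rw [coeffList, List.map_reverse, List.reverse_reverse, ofDigits_map_range,
    withBotSucc_degree_eq_natDegree_add_one hp, eval_eq_sum_range]

theorem ofDigits_coeffList (b : ℕ) (p : ℕ[X]) :
    Nat.ofDigits b p.coeffList = p.reverse.eval b := by
  rcases eq_or_ne p 0 with rfl | hp
  · simp
  rw [coeffList, withBotSucc_degree_eq_natDegree_add_one hp, List.range_eq_range',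
    List.reverse_range', List.map_map, ofDigits_map_range,
    eval_eq_sum_range' (Nat.lt_succ_of_le p.reverse_natDegree_le)]
  refine Finset.sum_congr rfl fun i hi => ?_
  rw [coeff_reverse, revAt_le (Finset.mem_range_succ_iff.1 hi)]
  simp

theorem digits_eval {b : ℕ} (hb : 1 < b) {p : ℕ[X]} (hp : ∀ i, p.coeff i < b) :
    Nat.digits b (p.eval b) = p.coeffList.reverse := by
  rw [← ofDigits_reverse_coeffList]
  refine Nat.digits_ofDigits b hb _ (fun d hd => ?_) fun hne => ?_
  · obtain ⟨i, -, rfl⟩ := List.mem_map.1 (List.mem_reverse.1 hd)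
    exact hp i
  · have hp0 : p ≠ 0 := by simpa using hne
    rw [List.getLast_reverse, head_coeffList]
    exact leadingCoeff_ne_zero.2 hp0

theorem rev_eval {p : ℕ[X]} (hp : ∀ i, p.coeff i < 10) :
    rev (p.eval 10) = p.reverse.eval 10 := by
  rw [rev, digits_eval (by norm_num) hp, List.reverse_reverse, ofDigits_coeffList]

/-- The polynomial whose coefficient at `X ^ i` is the `i`-th digit of `n` in base `b`, the units
digit being the constant term. In terms of it, a multiplication has no carries when the product of
the two polynomials again has all its coefficients below `b`. -/
noncomputable def digitPolynomial (b n : ℕ) : ℕ[X] := Nat.ofDigits X (Nat.digits b n)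

theorem eval_ofDigits_X (b : ℕ) (l : List ℕ) :
    (Nat.ofDigits (X : ℕ[X]) l).eval b = Nat.ofDigits b l := by
  induction l with
  | nil => simp [Nat.ofDigits]
  | cons d l ih => simp [Nat.ofDigits, ih]

theorem coeff_ofDigits_X (l : List ℕ) (i : ℕ) :
    (Nat.ofDigits (X : ℕ[X]) l).coeff i = l.getD i 0 := by
  induction l generalizing i with
  | nil => simp [Nat.ofDigits]
  | cons d l ih => cases i <;> simp [Nat.ofDigits, ih, coeff_natCast_ite]

theorem eval_digitPolynomial (b n : ℕ) : (digitPolynomial b n).eval b = n := by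
  rw [digitPolynomial, eval_ofDigits_X, Nat.ofDigits_digits]

theorem eval_one_digitPolynomial (b n : ℕ) :
    (digitPolynomial b n).eval 1 = (Nat.digits b n).sum := by
  rw [digitPolynomial, eval_ofDigits_X, Nat.ofDigits_one]

theorem coeff_digitPolynomial_le {b n c : ℕ} (h : ∀ d ∈ Nat.digits b n, d ≤ c) (i : ℕ) :
    (digitPolynomial b n).coeff i ≤ c := by
  rw [digitPolynomial, coeff_ofDigits_X, List.getD_eq_getElem?_getD]
  cases hd : (Nat.digits b n)[i]? with
  | none => exact Nat.zero_le c
  | some d => exact h d (List.mem_of_getElem? hd)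

theorem coeff_digitPolynomial_lt {b : ℕ} (hb : 1 < b) (n i : ℕ) :
    (digitPolynomial b n).coeff i < b :=
  Nat.lt_of_le_pred (by omega) <| coeff_digitPolynomial_le
    (fun _ hd => Nat.le_pred_of_lt (Nat.digits_lt_base hb hd)) i

theorem rev_eq_eval_reverse_digitPolynomial (n : ℕ) :
    rev n = (digitPolynomial 10 n).reverse.eval 10 := by
  rw [← rev_eval (coeff_digitPolynomial_lt (by norm_num) n), eval_digitPolynomial]

theorem rev_mul_of_coeff_lt {m n : ℕ}
    (h : ∀ i, (digitPolynomial 10 m * digitPolynomial 10 n).coeff i < 10) :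
    rev (m * n) = rev m * rev n := by
  have hmul := rev_eval h
  rwa [reverse_mul_of_domain, eval_mul, eval_mul, eval_digitPolynomial, eval_digitPolynomial,
    ← rev_eq_eval_reverse_digitPolynomial, ← rev_eq_eval_reverse_digitPolynomial] at hmul

theorem coeff_mul_le_eval_one_mul {p q : ℕ[X]} {c : ℕ} (hq : ∀ i, q.coeff i ≤ c) (i : ℕ) :
    (p * q).coeff i ≤ p.eval 1 * c := by
  have hsum : ∑ j ∈ Finset.range (i + 1), p.coeff j ≤ p.eval 1 := by
    rw [eval_eq_sum_range' (show p.natDegree < max p.natDegree i + 1 by omega)]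
    simp only [one_pow, mul_one]
    exact Finset.sum_le_sum_of_subset (Finset.range_mono (by omega))
  calc (p * q).coeff i
      = ∑ j ∈ Finset.range (i + 1), p.coeff j * q.coeff (i - j) := by
        rw [coeff_mul, Finset.Nat.sum_antidiagonal_eq_sum_range_succ
          (fun j k => p.coeff j * q.coeff k)]
    _ ≤ ∑ j ∈ Finset.range (i + 1), p.coeff j * c :=
        Finset.sum_le_sum fun j _ => Nat.mul_le_mul_left _ (hq _)
    _ = (∑ j ∈ Finset.range (i + 1), p.coeff j) * c := (Finset.sum_mul ..).symm
    _ ≤ p.eval 1 * c := Nat.mul_le_mul_right c hsum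

theorem rev_mul_of_digits_sum_mul_lt {m n c : ℕ} (hn : ∀ d ∈ Nat.digits 10 n, d ≤ c)
    (hm : (Nat.digits 10 m).sum * c < 10) : rev (m * n) = rev m * rev n := by
  refine rev_mul_of_coeff_lt fun i =>
    (coeff_mul_le_eval_one_mul (coeff_digitPolynomial_le hn) i).trans_lt ?_
  rwa [eval_one_digitPolynomial]

theorem not_ten_dvd_rev {n : ℕ} (hn : n ≠ 0) : ¬ 10 ∣ rev n := by
  have hne : Nat.digits 10 n ≠ [] := Nat.digits_ne_nil_iff_ne_zero.2 hn
  have hmod : rev n % 10 = (Nat.digits 10 n).getLast hne := by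
    rw [rev, Nat.ofDigits_mod_eq_head!, List.head!_eq_head?_getD, List.head?_reverse,
      List.getLast?_eq_getLast_of_ne_nil hne, Option.getD_some]
    exact Nat.mod_eq_of_lt (Nat.digits_lt_base (by norm_num) (List.getLast_mem hne))
  rw [Nat.dvd_iff_mod_eq_zero, hmod]
  exact Nat.getLast_digit_ne_zero 10 hn

theorem mod_mem_digits {b n : ℕ} (hb : 1 < b) (hn : n ≠ 0) : n % b ∈ Nat.digits b n := by
  rw [Nat.digits_def' hb hn.bot_lt]
  exact List.mem_cons_self

/-- If ρ is a decimal palindrome whose digits are all 0's and 1's,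
then 18·ρ is a v-palindrome. -/
theorem vpalindrome_of_binary_palindrome (ρ : ℕ) (hρ : 0 < ρ)
    (hpal : ρ = rev ρ) (hdig : ∀ d ∈ Nat.digits 10 ρ, d = 0 ∨ d = 1) :
    IsVPalindrome (18 * ρ) := by
  have hrev : rev (18 * ρ) = 81 * ρ := by
    have hle : ∀ d ∈ Nat.digits 10 ρ, d ≤ 1 := fun d hd => by have := hdig d hd; omega
    have h18 : rev 18 = 81 := by norm_num [rev, Nat.ofDigits]
    rw [rev_mul_of_digits_sum_mul_lt hle (by norm_num), h18, ← hpal]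
  have hunits : ρ % 10 = 1 := by
    have hndvd : ¬ 10 ∣ ρ := hpal ▸ not_ten_dvd_rev hρ.ne'
    exact (hdig _ (mod_mem_digits (by norm_num) hρ.ne')).resolve_left
      fun h0 => hndvd (Nat.dvd_of_mod_eq_zero h0)
  rw [IsVPalindrome, hrev]
  exact ⟨by omega, by omega, v_eighteen_mul_eq_v_eighty_one_mul (Nat.odd_iff.2 (by omega))⟩
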